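/- arXiv:1502.06144 — 2 statements merged into one kernel-verified Lean document; each statement's English description precedes it below -/
import Mathlib

section
/- Let 1 ≤ k ≤ n, m ≥ 1, π ∈ (0,1], α > 0, and let V = (V_1,…,V_m) have the lightly planted law P_{planted,π}. Then P_{planted,π}( σ(V) < ((1 − 2^{−k}) + π 2^{−k} − α) m ) ≤ exp(−2 α² m). -/
open scoped BigOperators Classical
open Filter Topology

abbrev F2n (n : ℕ) := Fin n → ZMod 2

def IsFlat (n k : ℕ) (W : Set (F2n n)) : Prop :=
  ∃ A : AffineSubspace (ZMod 2) (F2n n),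
    (A : Set (F2n n)) = W ∧ W.Nonempty ∧ Module.finrank (ZMod 2) A.direction = n - k

def Flat (n k : ℕ) : Type := {W : Set (F2n n) // IsFlat n k W}

noncomputable instance (n k : ℕ) : Fintype (Flat n k) := by
  unfold Flat; exact Fintype.ofFinite _

noncomputable def q0 (n k : ℕ) : Flat n k → ℝ :=
  fun _ => (Fintype.card (Flat n k) : ℝ)⁻¹

noncomputable def qx (n k : ℕ) (x : F2n n) : Flat n k → ℝ :=
  fun W => if x ∈ W.1 then 0 else (Nat.card {W : Flat n k // x ∉ W.1} : ℝ)⁻¹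

noncomputable def prob {α : Type*} [Fintype α] (p : α → ℝ) (E : Set α) : ℝ :=
  ∑ a, if a ∈ E then p a else 0

noncomputable def expect {α : Type*} [Fintype α] (p : α → ℝ) (f : α → ℝ) : ℝ :=
  ∑ a, p a * f a

noncomputable def Punif (n k m : ℕ) : (Fin m → Flat n k) → ℝ :=
  fun V => ∏ j, q0 n k (V j)

noncomputable def Pplanted (n k m : ℕ) : (Fin m → Flat n k) → ℝ :=
  fun V => ((2:ℝ)^n)⁻¹ * ∑ x : F2n n, ∏ j, qx n k x (V j)

noncomputable def Z (n k m : ℕ) (V : Fin m → Flat n k) : ℕ :=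
  Nat.card {x : F2n n // ∀ j, x ∉ (V j).1}

noncomputable def satCount (n k m : ℕ) (V : Fin m → Flat n k) (x : F2n n) : ℕ :=
  Nat.card {j : Fin m // x ∉ (V j).1}

noncomputable def maxSat (n k m : ℕ) (V : Fin m → Flat n k) : ℕ :=
  Finset.univ.sup (fun x : F2n n => satCount n k m V x)

noncomputable def qxpi (n k : ℕ) (x : F2n n) (π : ℝ) : Flat n k → ℝ :=
  fun W => (1 - π) * q0 n k W + π * qx n k x W

noncomputable def Pplantedpi (n k m : ℕ) (π : ℝ) : (Fin m → Flat n k) → ℝ :=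
  fun V => ((2:ℝ)^n)⁻¹ * ∑ x : F2n n, ∏ j, qxpi n k x π (V j)

noncomputable def DeltaK (k : ℕ) : ℝ :=
  Real.log (1/2) / Real.log (1 - ((2:ℝ)^k)⁻¹)

/-!
Conditionally on the planted point `x`, the flats are independent and each misses `x` with
probability `p = (1 - 2⁻ᵏ) + π 2⁻ᵏ`: by translation invariance every point lies on the same number
of `k`-flats, so a uniform flat contains `x` with probability `2⁻ᵏ`, whereas a planted one never
does. Hoeffding's inequality bounds the lower tail of the number of flats missing `x`. Since
`maxSat` dominates this number for every `x`, the same bound holds for each component of the planted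
mixture, hence for their average.
-/

open MeasureTheory ProbabilityTheory Finset

section FiniteWeights

variable {Ω ι : Type*} [Fintype Ω] [Fintype ι]

theorem prob_eq_sum_filter (p : Ω → ℝ) (E : Set Ω) : prob p E = ∑ a with a ∈ E, p a :=
  (sum_filter _ _).symm

theorem prob_mono {p : Ω → ℝ} (hp : ∀ a, 0 ≤ p a) {E F : Set Ω} (hEF : E ⊆ F) :
    prob p E ≤ prob p F := by
  simp only [prob_eq_sum_filter]
  exact sum_le_sum_of_subset_of_nonneg (monotone_filter_right _ fun _ _ hE ↦ hEF hE)
    fun a _ _ ↦ hp a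

theorem prob_add_prob_compl (p : Ω → ℝ) (E : Set Ω) : prob p E + prob p Eᶜ = ∑ a, p a := by
  simp only [prob_eq_sum_filter, Set.mem_compl_iff]
  exact sum_filter_add_sum_filter_not _ _ _

theorem prob_add (p q : Ω → ℝ) (E : Set Ω) :
    prob (fun a ↦ p a + q a) E = prob p E + prob q E := by
  simp only [prob_eq_sum_filter, sum_add_distrib]

theorem prob_const_mul (c : ℝ) (p : Ω → ℝ) (E : Set Ω) :
    prob (fun a ↦ c * p a) E = c * prob p E := by
  simp only [prob_eq_sum_filter, mul_sum]

theorem prob_sum (p : ι → Ω → ℝ) (E : Set Ω) :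
    prob (fun a ↦ ∑ i, p i a) E = ∑ i, prob (p i) E := by
  simp only [prob_eq_sum_filter]
  exact sum_comm

theorem measureReal_eq_prob [MeasurableSpace Ω] [MeasurableSingletonClass Ω] (μ : Measure Ω)
    [IsFiniteMeasure μ] (E : Set Ω) : μ.real E = prob (fun a ↦ μ.real {a}) E := by
  rw [prob_eq_sum_filter, sum_measureReal_singleton, coe_filter_univ, Set.ofPred_mem_eq]

/-- The probability mass function whose real weights are a given point of the standard simplex; it
makes Mathlib's measure-theoretic concentration inequalities available for finite weights. -/
noncomputable def pmfOfStdSimplex (w : Ω → ℝ) (hw : w ∈ stdSimplex ℝ Ω) : PMF Ω :=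
  PMF.ofFintype (fun a ↦ ENNReal.ofReal (w a)) (by
    rw [← ENNReal.ofReal_sum_of_nonneg fun a _ ↦ hw.1 a, hw.2, ENNReal.ofReal_one])

theorem pmfOfStdSimplex_toMeasure_real_singleton [MeasurableSpace Ω] [MeasurableSingletonClass Ω]
    {w : Ω → ℝ} (hw : w ∈ stdSimplex ℝ Ω) (a : Ω) :
    (pmfOfStdSimplex w hw).toMeasure.real {a} = w a := by
  rw [measureReal_def, PMF.toMeasure_apply_singleton _ _ (measurableSet_singleton a)]
  exact ENNReal.toReal_ofReal (hw.1 a)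

theorem pmfOfStdSimplex_toMeasure_real [MeasurableSpace Ω] [MeasurableSingletonClass Ω]
    {w : Ω → ℝ} (hw : w ∈ stdSimplex ℝ Ω) (E : Set Ω) :
    (pmfOfStdSimplex w hw).toMeasure.real E = prob w E := by
  rw [measureReal_eq_prob]
  simp only [pmfOfStdSimplex_toMeasure_real_singleton]

theorem pmfOfStdSimplex_toMeasure_pi_real [DecidableEq ι] [MeasurableSpace Ω]
    [MeasurableSingletonClass Ω] {w : Ω → ℝ} (hw : w ∈ stdSimplex ℝ Ω) (E : Set (ι → Ω)) :
    (Measure.pi fun _ : ι ↦ (pmfOfStdSimplex w hw).toMeasure).real E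
      = prob (fun V ↦ ∏ j, w (V j)) E := by
  rw [measureReal_eq_prob]
  congr 1 with V
  rw [measureReal_def, Measure.pi_singleton, ENNReal.toReal_prod]
  exact prod_congr rfl fun j _ ↦ pmfOfStdSimplex_toMeasure_real_singleton hw (V j)

end FiniteWeights

section Hoeffding

theorem hasSubgaussianMGF_measureReal_sub_indicator {Ω : Type*} [MeasurableSpace Ω] (μ : Measure Ω)
    [IsProbabilityMeasure μ] {S : Set Ω} (hS : MeasurableSet S) :
    HasSubgaussianMGF (fun ω ↦ μ.real S - S.indicator 1 ω) (1 / 4) μ := by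
  have h_mem : ∀ ω, S.indicator (1 : Ω → ℝ) ω ∈ Set.Icc (0 : ℝ) 1 := fun ω ↦
    ⟨Set.indicator_nonneg (fun _ _ ↦ zero_le_one) ω,
      Set.indicator_le_self' (fun _ _ ↦ zero_le_one) ω⟩
  have h := (hasSubgaussianMGF_of_mem_Icc
    (measurable_one.indicator hS).aemeasurable (ae_of_all μ h_mem)).neg
  have h_param : (‖(1 : ℝ) - 0‖₊ / 2) ^ 2 = 1 / 4 := by
    rw [sub_zero, nnnorm_one]; norm_num
  rw [integral_indicator_one hS, h_param] at h
  exact h.congr (ae_of_all _ fun ω ↦ by simp)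

theorem hasSubgaussianMGF_pi_eval {ι : Type*} [Fintype ι] {Ω : ι → Type*}
    [∀ i, MeasurableSpace (Ω i)] {μ : ∀ i, Measure (Ω i)} [∀ i, IsProbabilityMeasure (μ i)] {i : ι}
    {X : Ω i → ℝ} {c : NNReal} (hX : HasSubgaussianMGF X c (μ i)) :
    HasSubgaussianMGF (fun V : ∀ i, Ω i ↦ X (V i)) c (Measure.pi μ) := by
  rw [← (measurePreserving_eval μ i).map_eq] at hX
  exact hX.of_map (measurable_pi_apply i).aemeasurable

theorem sum_indicator_one_eq_natCard {Ω ι : Type*} [Fintype ι] (S : Set Ω) (V : ι → Ω) :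
    ∑ j, S.indicator (1 : Ω → ℝ) (V j) = Nat.card {j // V j ∈ S} := by
  simp only [Set.indicator_apply, Pi.one_apply, sum_boole, Nat.card_eq_fintype_card,
    Fintype.card_subtype]

theorem hoeffding_pi_natCard_mem {Ω ι : Type*} [Fintype ι] [MeasurableSpace Ω] (μ : Measure Ω)
    [IsProbabilityMeasure μ] {S : Set Ω} (hS : MeasurableSet S) {α : ℝ} (hα : 0 ≤ α) :
    (Measure.pi fun _ : ι ↦ μ).real
        {V | (Nat.card {j // V j ∈ S} : ℝ) ≤ (μ.real S - α) * Fintype.card ι}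
      ≤ Real.exp (-2 * α ^ 2 * Fintype.card ι) := by
  have h_meas : Measurable fun ω ↦ μ.real S - S.indicator 1 ω :=
    (measurable_one.indicator hS).const_sub _
  have h_indep : iIndepFun (fun (j : ι) (V : ι → Ω) ↦ μ.real S - S.indicator 1 (V j))
      (Measure.pi fun _ ↦ μ) :=
    iIndepFun_pi fun _ ↦ h_meas.aemeasurable
  have h_subgaussian : ∀ j ∈ (univ : Finset ι), HasSubgaussianMGF
      (fun V : ι → Ω ↦ μ.real S - S.indicator 1 (V j)) (1 / 4) (Measure.pi fun _ ↦ μ) :=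
    fun _ _ ↦ hasSubgaussianMGF_pi_eval (Ω := fun _ ↦ Ω) (μ := fun _ ↦ μ)
      (X := fun ω ↦ μ.real S - S.indicator 1 ω) (hasSubgaussianMGF_measureReal_sub_indicator μ hS)
  have h := HasSubgaussianMGF.measure_sum_ge_le_of_iIndepFun h_indep h_subgaussian
    (ε := α * Fintype.card ι) (by positivity)
  have h_exponent : -(α * Fintype.card ι) ^ 2 / (2 * ∑ _j : ι, ((1 / 4 : NNReal) : ℝ))
      = -2 * α ^ 2 * Fintype.card ι := by
    rcases eq_or_ne (Fintype.card ι : ℝ) 0 with h0 | h0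
    · simp [h0]
    · simp only [sum_const, card_univ, nsmul_eq_mul]
      push_cast
      field_simp
      ring
  have h_event : {V : ι → Ω | (Nat.card {j // V j ∈ S} : ℝ) ≤ (μ.real S - α) * Fintype.card ι}
      = {V | α * Fintype.card ι ≤ ∑ j, (μ.real S - S.indicator 1 (V j))} := by
    ext V
    simp only [Set.mem_ofPred_eq, sum_sub_distrib, sum_indicator_one_eq_natCard,
      sum_const, card_univ, nsmul_eq_mul]
    constructor <;> intro <;> linarith
  rw [h_event, ← h_exponent]
  exact_mod_cast h

theorem hoeffding_prob_natCard_mem {Ω ι : Type*} [Fintype Ω] [Fintype ι] [DecidableEq ι] {w : Ω → ℝ}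
    (hw : w ∈ stdSimplex ℝ Ω) (S : Set Ω) {α : ℝ} (hα : 0 ≤ α) :
    prob (fun V : ι → Ω ↦ ∏ j, w (V j))
        {V | (Nat.card {j // V j ∈ S} : ℝ) ≤ (prob w S - α) * Fintype.card ι}
      ≤ Real.exp (-2 * α ^ 2 * Fintype.card ι) := by
  let _ : MeasurableSpace Ω := ⊤
  rw [← pmfOfStdSimplex_toMeasure_pi_real hw, ← pmfOfStdSimplex_toMeasure_real hw]
  exact hoeffding_pi_natCard_mem _ MeasurableSpace.measurableSet_top hα

end Hoeffding

section Flats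

theorem natCard_affineSubspace_eq_pow_finrank {K V P : Type*} [DivisionRing K] [AddCommGroup V]
    [Module K V] [Module.Finite K V] [AddTorsor V P] (A : AffineSubspace K P)
    (hA : (A : Set P).Nonempty) : Nat.card A = Nat.card K ^ Module.finrank K A.direction := by
  obtain ⟨p, hp⟩ := hA
  have : Nonempty A := ⟨⟨p, hp⟩⟩
  rw [← Module.natCard_eq_pow_finrank]
  exact Nat.card_congr (Equiv.vaddConst (⟨p, hp⟩ : A)).symm

variable {n k : ℕ}

theorem nonempty_flat (n k : ℕ) : Nonempty (Flat n k) := by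
  obtain ⟨v, hv⟩ := exists_linearIndependent_of_le_finrank (R := ZMod 2) (M := F2n n)
    (n := n - k) (by simp)
  refine ⟨⟨_, (Submodule.span (ZMod 2) (Set.range v)).toAffineSubspace, rfl, ⟨0, ?_⟩, ?_⟩⟩
  · exact Submodule.zero_mem _
  · rw [Submodule.toAffineSubspace_direction, finrank_span_eq_card hv, Fintype.card_fin]

theorem card_flat_pos (n k : ℕ) : 0 < Fintype.card (Flat n k) :=
  Fintype.card_pos_iff.2 (nonempty_flat n k)

theorem IsFlat.card_filter_mem {W : Set (F2n n)} (hW : IsFlat n k W) :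
    #{x | x ∈ W} = 2 ^ (n - k) := by
  obtain ⟨A, rfl, h_nonempty, h_finrank⟩ := hW
  have h_card := natCard_affineSubspace_eq_pow_finrank A h_nonempty
  rw [Nat.card_zmod, h_finrank, Nat.card_eq_fintype_card] at h_card
  exact (Fintype.card_subtype _).symm.trans h_card

open scoped Pointwise in
theorem IsFlat.vadd {W : Set (F2n n)} (hW : IsFlat n k W) (v : F2n n) : IsFlat n k (v +ᵥ W) := by
  obtain ⟨A, rfl, h_nonempty, h_finrank⟩ := hW
  refine ⟨v +ᵥ A, AffineSubspace.coe_pointwise_vadd v A, h_nonempty.vadd_set, ?_⟩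
  rwa [AffineSubspace.pointwise_vadd_direction]

open scoped Pointwise in
theorem card_flats_through_le (x y : F2n n) :
    #{W : Flat n k | x ∈ W.1} ≤ #{W : Flat n k | y ∈ W.1} := by
  refine card_le_card_of_injOn (fun W ↦ ⟨(y - x) +ᵥ W.1, W.2.vadd (y - x)⟩) ?_ ?_
  · intro W hW
    have hx : x ∈ W.1 := (mem_filter_univ W).1 hW
    have hy : y ∈ (y - x) +ᵥ W.1 := by simpa using Set.vadd_mem_vadd_set (a := y - x) hx
    exact (mem_filter_univ _).2 hy
  · intro W _ W' _ h
    exact Subtype.ext (vadd_left_cancel (y - x) (congrArg Subtype.val h))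

theorem card_flats_through_eq (x y : F2n n) :
    #{W : Flat n k | x ∈ W.1} = #{W : Flat n k | y ∈ W.1} :=
  (card_flats_through_le x y).antisymm (card_flats_through_le y x)

theorem two_pow_mul_card_flats_through (hkn : k ≤ n) (x : F2n n) :
    2 ^ k * #{W : Flat n k | x ∈ W.1} = Fintype.card (Flat n k) := by
  have h_count : 2 ^ n * #{W : Flat n k | x ∈ W.1} = Fintype.card (Flat n k) * 2 ^ (n - k) := by
    simpa using card_mul_eq_card_mul (s := univ) (t := univ)
      (fun (y : F2n n) (W : Flat n k) ↦ y ∈ W.1)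
      (fun y _ ↦ card_flats_through_eq y x) (fun W _ ↦ W.2.card_filter_mem)
  refine Nat.eq_of_mul_eq_mul_right (Nat.two_pow_pos (n - k)) ?_
  rw [← h_count, mul_right_comm, ← pow_add, Nat.add_sub_cancel' hkn]

theorem card_flats_missing_pos (hk : 1 ≤ k) (hkn : k ≤ n) (x : F2n n) :
    0 < #{W : Flat n k | x ∉ W.1} := by
  have h_through := two_pow_mul_card_flats_through hkn x
  have h_split := card_filter_add_card_filter_not (s := univ)
    (fun W : Flat n k ↦ x ∈ W.1)
  have h_two : 2 ≤ 2 ^ k := le_self_pow₀ one_le_two (Nat.one_le_iff_ne_zero.1 hk)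
  have h_pos := card_flat_pos n k
  rw [card_univ] at h_split
  nlinarith

end Flats

section PlantedWeights

variable {n k : ℕ}

theorem q0_mem_stdSimplex (n k : ℕ) : q0 n k ∈ stdSimplex ℝ (Flat n k) := by
  refine ⟨fun W ↦ inv_nonneg.2 (Nat.cast_nonneg _), ?_⟩
  have h_card : (Fintype.card (Flat n k) : ℝ) ≠ 0 := by exact_mod_cast (card_flat_pos n k).ne'
  simp [q0, h_card]

theorem prob_q0_through (hkn : k ≤ n) (x : F2n n) :
    prob (q0 n k) {W | x ∈ W.1} = ((2 : ℝ) ^ k)⁻¹ := by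
  have h_card : (2 : ℝ) ^ k * #{W : Flat n k | x ∈ W.1} = Fintype.card (Flat n k) := by
    exact_mod_cast two_pow_mul_card_flats_through hkn x
  have h_pos : (0 : ℝ) < Fintype.card (Flat n k) := by exact_mod_cast card_flat_pos n k
  simp only [prob_eq_sum_filter, Set.mem_ofPred_eq, q0, sum_const, nsmul_eq_mul]
  field_simp
  linarith

theorem prob_q0_missing (hkn : k ≤ n) (x : F2n n) :
    prob (q0 n k) {W | x ∉ W.1} = 1 - ((2 : ℝ) ^ k)⁻¹ := by
  rw [← prob_q0_through hkn x, ← (q0_mem_stdSimplex n k).2, ← prob_add_prob_compl _ {W | x ∈ W.1},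
    add_sub_cancel_left]
  rfl

theorem prob_qx_through (x : F2n n) : prob (qx n k x) {W | x ∈ W.1} = 0 := by
  rw [prob_eq_sum_filter]
  exact sum_eq_zero fun W hW ↦ if_pos ((mem_filter_univ W).1 hW)

theorem prob_qx_missing (hk : 1 ≤ k) (hkn : k ≤ n) (x : F2n n) :
    prob (qx n k x) {W | x ∉ W.1} = 1 := by
  have h_card : (#{W : Flat n k | x ∉ W.1} : ℝ) ≠ 0 := by
    exact_mod_cast (card_flats_missing_pos hk hkn x).ne'
  have h_qx : ∀ W ∈ ({W | x ∉ W.1} : Finset (Flat n k)),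
      qx n k x W = (#{W : Flat n k | x ∉ W.1} : ℝ)⁻¹ := fun W hW ↦ by
    rw [qx, if_neg ((mem_filter_univ W).1 hW), Nat.card_eq_fintype_card, Fintype.card_subtype]
  rw [prob_eq_sum_filter]
  simp only [Set.mem_ofPred_eq]
  rw [sum_congr rfl h_qx, sum_const, nsmul_eq_mul, mul_inv_cancel₀ h_card]

theorem qx_mem_stdSimplex (hk : 1 ≤ k) (hkn : k ≤ n) (x : F2n n) :
    qx n k x ∈ stdSimplex ℝ (Flat n k) := by
  constructor
  · intro W
    unfold qx
    positivity
  · rw [← prob_add_prob_compl _ {W | x ∈ W.1}, prob_qx_through, zero_add]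
    exact prob_qx_missing hk hkn x

theorem qxpi_mem_stdSimplex (hk : 1 ≤ k) (hkn : k ≤ n) (x : F2n n) {π : ℝ} (hπ0 : 0 ≤ π)
    (hπ1 : π ≤ 1) : qxpi n k x π ∈ stdSimplex ℝ (Flat n k) :=
  convex_stdSimplex ℝ _ (q0_mem_stdSimplex n k) (qx_mem_stdSimplex hk hkn x)
    (sub_nonneg.2 hπ1) hπ0 (sub_add_cancel 1 π)

theorem prob_qxpi_missing (hk : 1 ≤ k) (hkn : k ≤ n) (x : F2n n) (π : ℝ) :
    prob (qxpi n k x π) {W | x ∉ W.1} = (1 - ((2 : ℝ) ^ k)⁻¹) + π * ((2 : ℝ) ^ k)⁻¹ := by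
  unfold qxpi
  rw [prob_add, prob_const_mul, prob_const_mul, prob_q0_missing hkn, prob_qx_missing hk hkn]
  ring

theorem prob_Pplantedpi (m : ℕ) (π : ℝ) (E : Set (Fin m → Flat n k)) :
    prob (Pplantedpi n k m π) E
      = ((2 : ℝ) ^ n)⁻¹ * ∑ x : F2n n, prob (fun V ↦ ∏ j, qxpi n k x π (V j)) E := by
  unfold Pplantedpi
  rw [prob_const_mul, prob_sum]

theorem satCount_le_maxSat {m : ℕ} (V : Fin m → Flat n k) (x : F2n n) :
    satCount n k m V x ≤ maxSat n k m V :=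
  le_sup (f := satCount n k m V) (mem_univ x)

theorem hoeffding_prob_satCount (hk : 1 ≤ k) (hkn : k ≤ n) (m : ℕ) (x : F2n n) {π : ℝ}
    (hπ0 : 0 ≤ π) (hπ1 : π ≤ 1) {α : ℝ} (hα : 0 ≤ α) :
    prob (fun V : Fin m → Flat n k ↦ ∏ j, qxpi n k x π (V j))
        {V | (satCount n k m V x : ℝ) ≤ ((1 - ((2 : ℝ) ^ k)⁻¹) + π * ((2 : ℝ) ^ k)⁻¹ - α) * m}
      ≤ Real.exp (-2 * α ^ 2 * m) := by
  have h := hoeffding_prob_natCard_mem (ι := Fin m) (qxpi_mem_stdSimplex hk hkn x hπ0 hπ1)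
    {W | x ∉ W.1} hα
  rwa [prob_qxpi_missing hk hkn, Fintype.card_fin] at h

end PlantedWeights

theorem stmt16 (n k m : ℕ) (hk : 1 ≤ k) (hkn : k ≤ n) (hm : 1 ≤ m)
    (π : ℝ) (hπ0 : 0 < π) (hπ1 : π ≤ 1) (α : ℝ) (hα : 0 < α) :
    prob (Pplantedpi n k m π)
        {V | (maxSat n k m V : ℝ) < ((1 - ((2:ℝ)^k)⁻¹) + π * ((2:ℝ)^k)⁻¹ - α) * m}
      ≤ Real.exp (-2 * α^2 * m) := by
  set p : ℝ := (1 - ((2:ℝ)^k)⁻¹) + π * ((2:ℝ)^k)⁻¹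
  have h_planted : ∀ x : F2n n, prob (fun V : Fin m → Flat n k ↦ ∏ j, qxpi n k x π (V j))
      {V | (maxSat n k m V : ℝ) < (p - α) * m} ≤ Real.exp (-2 * α^2 * m) := by
    intro x
    have h_nonneg (V : Fin m → Flat n k) : 0 ≤ ∏ j, qxpi n k x π (V j) :=
      prod_nonneg fun j _ ↦ (qxpi_mem_stdSimplex hk hkn x hπ0.le hπ1).1 (V j)
    refine (prob_mono h_nonneg fun V (hV : (maxSat n k m V : ℝ) < (p - α) * m) ↦ ?_).trans
      (hoeffding_prob_satCount hk hkn m x hπ0.le hπ1 hα.le)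
    exact (Nat.cast_le.2 (satCount_le_maxSat V x)).trans hV.le
  calc prob (Pplantedpi n k m π) {V | (maxSat n k m V : ℝ) < (p - α) * m}
      ≤ ((2 : ℝ) ^ n)⁻¹ * ∑ _x : F2n n, Real.exp (-2 * α^2 * m) := by
        rw [prob_Pplantedpi]
        gcongr with x
        exact h_planted x
    _ = Real.exp (-2 * α^2 * m) := by simp
end

section
/- Let 1 ≤ k ≤ n, x ∈ F_2^n, η ∈ [0, 1/2), and π := 1 − 2η. Generate a random k-flat V as follows: draw (ℓ_1,…,ℓ_k) uniformly from the set of linearly independent k-tuples of linear forms on F_2^n; independently draw ε_1,…,ε_{k−1} i.i.d. uniform in F_2; independently draw e ∈ F_2 with P(e = 1) = η; set ε_k := ℓ_k(x) + 1 + e; and let V := {z ∈ F_2^n : ℓ_i(z) = ε_i for all i = 1,…,k}. Then the distribution of V equals q_{x,π} = (1 − π) q_0 + π q_x. -/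
open scoped BigOperators Classical
open Filter Topology

abbrev LinForm (n : ℕ) := F2n n →ₗ[ZMod 2] ZMod 2

noncomputable instance (n : ℕ) : Fintype (LinForm n) :=
  Fintype.ofInjective (fun f => (f : F2n n → ZMod 2)) DFunLike.coe_injective

noncomputable instance (n k : ℕ) :
    Fintype {ℓ : Fin k → LinForm n // LinearIndependent (ZMod 2) ℓ} :=
  Fintype.ofFinite _

/-! An affine automorphism `e` carries the flats drawn around the base point `x` to flats drawn
around `e x`, and the affine automorphisms with `e x = x'` are transitive on the pairs of flats of
one dimension that agree on whether they contain `x`, respectively `x'`. Hence, if the offset vector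
`δ = ε - ℓ x` is uniform, the base point is immaterial and the law of the flat is `q0`; if `δ` is
never `0`, the flat avoids `x` and its law is constant on the flats avoiding `x`, so it is `qx`. Any
distribution `μ` of `δ` is `2 ^ k * μ 0` times the uniform one plus a remainder vanishing at `0`.
For the noisy parities `μ 0 = η / 2 ^ (k - 1)`, so the weight of the uniform part is `2 * η`. -/

section Transitivity

variable {ι K V P : Type*} [DivisionRing K] [AddCommGroup V] [Module K V]

lemma span_range_basis_coe {D : Submodule K V} (b : Module.Basis ι K D) :
    Submodule.span K (Set.range fun i => (b i : V)) = D := by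
  have h : (Submodule.span K (Set.range b)).map D.subtype = D := by
    rw [b.span_eq, Submodule.map_subtype_top]
  rwa [Submodule.map_span, ← Set.range_comp] at h

variable [FiniteDimensional K V]

lemma exists_linearEquiv_apply_eq {v v' : ι → V} (hv : LinearIndependent K v)
    (hv' : LinearIndependent K v') : ∃ φ : V ≃ₗ[K] V, ∀ i, φ (v i) = v' i := by
  obtain ⟨φ, hφ⟩ := Submodule.exists_linearEquiv_restrict_eq
    ((Module.Basis.span hv).equiv (Module.Basis.span hv') (Equiv.refl ι))
  refine ⟨φ, fun i => ?_⟩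
  have h := hφ (Module.Basis.span hv i)
  rw [Module.Basis.equiv_apply] at h
  simpa [Module.Basis.span_apply] using h.symm

lemma exists_linearEquiv_map_eq {D D' : Submodule K V}
    (h : Module.finrank K D = Module.finrank K D') :
    ∃ φ : V ≃ₗ[K] V, D.map (φ : V →ₗ[K] V) = D' := by
  obtain ⟨φ, hφ⟩ := Submodule.exists_linearEquiv_restrict_eq (LinearEquiv.ofFinrankEq D D' h)
  refine ⟨φ, ?_⟩
  have h : (φ : V →ₗ[K] V) ∘ₗ D.subtype = D'.subtype ∘ₗ (LinearEquiv.ofFinrankEq D D' h) :=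
    LinearMap.ext fun d => (hφ d).symm
  rw [← D.range_subtype, ← LinearMap.range_comp, h, LinearEquiv.range_comp, D'.range_subtype]

lemma exists_linearEquiv_map_eq_apply_eq {D D' : Submodule K V}
    (h : Module.finrank K D = Module.finrank K D') {u u' : V} (hu : u ∉ D) (hu' : u' ∉ D') :
    ∃ φ : V ≃ₗ[K] V, D.map (φ : V →ₗ[K] V) = D' ∧ φ u = u' := by
  let b := Module.finBasis K D
  let b' := Module.finBasisOfFinrankEq K D' h.symm
  obtain ⟨φ, hφ⟩ := exists_linearEquiv_apply_eq
    ((b.linearIndependent.map' D.subtype D.ker_subtype).finCons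
      ((span_range_basis_coe b).symm ▸ hu))
    ((b'.linearIndependent.map' D'.subtype D'.ker_subtype).finCons
      ((span_range_basis_coe b').symm ▸ hu'))
  refine ⟨φ, ?_, by simpa using hφ 0⟩
  rw [← span_range_basis_coe b, ← span_range_basis_coe b', Submodule.map_span, ← Set.range_comp]
  exact congrArg (fun v => Submodule.span K (Set.range v))
    (funext fun i => by simpa using hφ i.succ)

variable [AddTorsor V P]

lemma exists_affineEquiv_preimage_eq {A A' : AffineSubspace K P}
    (hdir : Module.finrank K A.direction = Module.finrank K A'.direction)
    (hA : (A : Set P).Nonempty) (hA' : (A' : Set P).Nonempty) {x x' : P} (h : x ∈ A ↔ x' ∈ A') :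
    ∃ e : P ≃ᵃ[K] P, e x = x' ∧ e ⁻¹' (A' : Set P) = A := by
  suffices ∃ p ∈ A, ∃ p' ∈ A', ∃ φ : V ≃ₗ[K] V,
      A.direction.map (φ : V →ₗ[K] V) = A'.direction ∧ φ (p -ᵥ x) = p' -ᵥ x' by
    obtain ⟨p, hp, p', hp', φ, hφ, hpx⟩ := this
    refine ⟨(AffineEquiv.vaddConst K x).symm.trans
      (φ.toAffineEquiv.trans (AffineEquiv.vaddConst K x')), by simp, ?_⟩
    ext z
    have hz : (φ (z -ᵥ x) +ᵥ x') -ᵥ p' = φ (z -ᵥ p) := by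
      rw [vadd_vsub_assoc, ← vsub_sub_vsub_cancel_right z p x, map_sub, hpx, sub_eq_add_neg,
        neg_vsub_eq_vsub_rev]
    simp [← AffineSubspace.vsub_right_mem_direction_iff_mem hp,
      ← AffineSubspace.vsub_right_mem_direction_iff_mem hp', hz, ← hφ]
  by_cases hx : x ∈ A
  · obtain ⟨φ, hφ⟩ := exists_linearEquiv_map_eq hdir
    exact ⟨x, hx, x', h.1 hx, φ, hφ, by simp⟩
  · obtain ⟨p, hp⟩ := hA
    obtain ⟨p', hp'⟩ := hA'
    have hpx : p -ᵥ x ∉ A.direction := by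
      rwa [AffineSubspace.vsub_left_mem_direction_iff_mem hp]
    have hpx' : p' -ᵥ x' ∉ A'.direction := by
      rwa [AffineSubspace.vsub_left_mem_direction_iff_mem hp', ← h]
    obtain ⟨φ, hφ, hφx⟩ := exists_linearEquiv_map_eq_apply_eq hdir hpx hpx'
    exact ⟨p, hp, p', hp', φ, hφ, hφx⟩

end Transitivity

section LevelSet

variable {ι K V P : Type*} [CommRing K] [AddCommGroup V] [Module K V] [AddTorsor V P]

/-- The common level set of the forms `ℓ i`, their values being measured from the base point `x`:
the offsets `δ` correspond to the right-hand sides `ε i = ℓ i x + δ i` of the paper. -/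
def levelSet (x : P) (ℓ : ι → Module.Dual K V) (δ : ι → K) : Set P :=
  {z | ∀ i, ℓ i (z -ᵥ x) = δ i}

lemma self_mem_levelSet_iff {x : P} {ℓ : ι → Module.Dual K V} {δ : ι → K} :
    x ∈ levelSet x ℓ δ ↔ δ = 0 := by
  simp [levelSet, funext_iff, eq_comm]

lemma levelSet_eq_levelSet_add (x y : P) (ℓ : ι → Module.Dual K V) (δ : ι → K) :
    levelSet x ℓ δ = levelSet y ℓ (δ + fun i => ℓ i (x -ᵥ y)) := by
  ext z
  refine forall_congr' fun i => ?_
  rw [← vsub_sub_vsub_cancel_right z x y, map_sub, sub_eq_iff_eq_add, Pi.add_apply]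

lemma preimage_levelSet (e : P ≃ᵃ[K] P) (x : P) (ℓ : ι → Module.Dual K V) (δ : ι → K) :
    e ⁻¹' levelSet (e x) ℓ δ = levelSet x (fun i => e.linear.dualMap (ℓ i)) δ := by
  ext z
  have hz : e.linear (z -ᵥ x) = e z -ᵥ e x := e.toAffineMap.linearMap_vsub z x
  simp [levelSet, hz]

end LevelSet

section IndependentForms

variable {ι K V P : Type*} [Field K] [AddCommGroup V] [Module K V] [FiniteDimensional K V]
  [AddTorsor V P] {ℓ : ι → Module.Dual K V}

lemma card_add_finrank_ker_pi [Fintype ι] (hℓ : LinearIndependent K ℓ) :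
    Fintype.card ι + Module.finrank K (LinearMap.ker (LinearMap.pi ℓ)) = Module.finrank K V := by
  have hker : LinearMap.ker (LinearMap.pi ℓ) =
      (Submodule.span K (Set.range ℓ)).dualCoannihilator := by
    apply SetLike.coe_injective
    rw [Submodule.coe_dualCoannihilator_span]
    ext z
    simp [funext_iff]
  rw [hker, ← finrank_span_eq_card hℓ, Subspace.finrank_add_finrank_dualCoannihilator_eq]

lemma surjective_pi_of_linearIndependent [Finite ι] (hℓ : LinearIndependent K ℓ) :
    Function.Surjective (LinearMap.pi ℓ) := by
  cases nonempty_fintype ι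
  rw [← LinearMap.range_eq_top]
  apply Submodule.eq_top_of_finrank_eq
  rw [Module.finrank_fintype_fun_eq_card]
  have hnull := LinearMap.finrank_range_add_finrank_ker (LinearMap.pi ℓ)
  rw [← card_add_finrank_ker_pi hℓ] at hnull
  exact Nat.add_right_cancel hnull

lemma exists_mk'_eq_levelSet [Finite ι] (hℓ : LinearIndependent K ℓ) (x : P) (δ : ι → K) :
    ∃ p : P, (AffineSubspace.mk' p (LinearMap.ker (LinearMap.pi ℓ)) : AffineSubspace K P) =
      levelSet x ℓ δ := by
  obtain ⟨v, rfl⟩ := surjective_pi_of_linearIndependent hℓ δ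
  refine ⟨v +ᵥ x, ?_⟩
  ext z
  simp [levelSet, funext_iff, vsub_vadd_eq_vsub_sub, sub_eq_zero]

end IndependentForms

section FlatLaw

variable {n k : ℕ}

lemma isFlat_levelSet {ℓ : Fin k → LinForm n} (hℓ : LinearIndependent (ZMod 2) ℓ) (x : F2n n)
    (δ : Fin k → ZMod 2) : IsFlat n k (levelSet x ℓ δ) := by
  obtain ⟨p, hp⟩ := exists_mk'_eq_levelSet hℓ x δ
  have hdim := card_add_finrank_ker_pi hℓ
  rw [Fintype.card_fin, Module.finrank_fin_fun] at hdim
  refine ⟨_, hp, hp ▸ ⟨p, AffineSubspace.self_mem_mk' p _⟩, ?_⟩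
  rw [AffineSubspace.direction_mk']
  exact Nat.eq_sub_of_add_eq' hdim

lemma exists_affineEquiv_preimage_eq_of_isFlat {W W' : Set (F2n n)} (hW : IsFlat n k W)
    (hW' : IsFlat n k W') {x x' : F2n n} (h : x ∈ W ↔ x' ∈ W') :
    ∃ e : F2n n ≃ᵃ[ZMod 2] F2n n, e x = x' ∧ e ⁻¹' W' = W := by
  obtain ⟨A, rfl, hA, hdim⟩ := hW
  obtain ⟨A', rfl, hA', hdim'⟩ := hW'
  exact exists_affineEquiv_preimage_eq (hdim.trans hdim'.symm) hA hA' h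

/-- The linearly independent `k`-tuples of linear forms on `F_2^n`. -/
abbrev IndepForms (n k : ℕ) : Type :=
  {ℓ : Fin k → LinForm n // LinearIndependent (ZMod 2) ℓ}

/-- Precomposition of tuples of forms with a linear automorphism. -/
def indepFormsCongr (φ : F2n n ≃ₗ[ZMod 2] F2n n) : IndepForms n k ≃ IndepForms n k :=
  (Equiv.arrowCongr (Equiv.refl (Fin k)) φ.dualMap.toEquiv).subtypeEquiv fun _ =>
    ((φ.dualMap : LinForm n →ₗ[ZMod 2] LinForm n).linearIndependent_iff φ.dualMap.ker).symm

lemma nonempty_indepForms (hkn : k ≤ n) : Nonempty (IndepForms n k) :=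
  ⟨fun i => (Pi.basisFun (ZMod 2) (Fin n)).dualBasis (Fin.castLE hkn i),
    (Pi.basisFun (ZMod 2) (Fin n)).dualBasis.linearIndependent.comp _ (Fin.castLE_injective hkn)⟩

/-- The law of the flat `levelSet x ℓ δ` for a uniformly random independent tuple `ℓ` and an
independent offset vector `δ` with weights `μ`. These are arbitrary reals, so that the law is
linear in `μ`. -/
noncomputable def flatLaw (x : F2n n) (μ : (Fin k → ZMod 2) → ℝ) (W : Flat n k) : ℝ :=
  (Nat.card (IndepForms n k) : ℝ)⁻¹ *
    ∑ ℓ : IndepForms n k, ∑ δ, if levelSet x ℓ.1 δ = W.1 then μ δ else 0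

lemma flatLaw_add (x : F2n n) (μ ν : (Fin k → ZMod 2) → ℝ) (W : Flat n k) :
    flatLaw x (μ + ν) W = flatLaw x μ W + flatLaw x ν W := by
  simp only [flatLaw, ← mul_add, ← Finset.sum_add_distrib, ite_add_ite, add_zero, Pi.add_apply]

lemma sum_flatLaw (hkn : k ≤ n) (x : F2n n) (μ : (Fin k → ZMod 2) → ℝ) :
    ∑ W, flatLaw x μ W = ∑ δ, μ δ := by
  have hone (ℓ : IndepForms n k) (δ : Fin k → ZMod 2) :
      ∑ W : Flat n k, (if levelSet x ℓ.1 δ = W.1 then μ δ else 0) = μ δ := by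
    let V : Flat n k := ⟨levelSet x ℓ.1 δ, isFlat_levelSet ℓ.2 x δ⟩
    rw [Fintype.sum_eq_single V fun W hW => if_neg fun h => hW (Subtype.ext h.symm), if_pos rfl]
  have := nonempty_indepForms hkn
  simp only [flatLaw]
  rw [← Finset.mul_sum, Finset.sum_comm]
  simp only [Finset.sum_comm (s := (Finset.univ : Finset (Flat n k))), hone]
  simp [Nat.card_eq_fintype_card]

lemma flatLaw_congr {x x' : F2n n} (μ : (Fin k → ZMod 2) → ℝ) {W W' : Flat n k}
    (h : x ∈ W.1 ↔ x' ∈ W'.1) : flatLaw x μ W = flatLaw x' μ W' := by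
  obtain ⟨e, rfl, he⟩ := exists_affineEquiv_preimage_eq_of_isFlat W.2 W'.2 h
  refine congrArg _ (Fintype.sum_equiv (indepFormsCongr e.linear) _ _ fun ℓ => ?_).symm
  refine Fintype.sum_congr _ _ fun δ => if_congr ?_ rfl rfl
  rw [← he, ← Set.preimage_eq_preimage e.surjective, preimage_levelSet]
  rfl

lemma flatLaw_const (hkn : k ≤ n) (x : F2n n) (c : ℝ) (W : Flat n k) :
    flatLaw x (fun _ => c) W = 2 ^ k * c * q0 n k W := by
  have hbase (x y : F2n n) (W : Flat n k) :
      flatLaw x (fun _ => c) W = flatLaw y (fun _ => c) W := by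
    refine congrArg _ (Fintype.sum_congr _ _ fun ℓ => ?_)
    refine Fintype.sum_equiv (Equiv.addRight fun i => ℓ.1 i (x - y)) _ _ fun δ => ?_
    rw [levelSet_eq_levelSet_add x y]
    rfl
  have hconst (W' : Flat n k) : flatLaw x (fun _ => c) W' = flatLaw x (fun _ => c) W := by
    obtain ⟨-, -, ⟨w, hw⟩, -⟩ := W.2
    obtain ⟨-, -, ⟨w', hw'⟩, -⟩ := W'.2
    rw [hbase x w', hbase x w, flatLaw_congr _ (iff_of_true hw' hw)]
  have : Nonempty (Flat n k) := ⟨W⟩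
  have hsum := sum_flatLaw hkn x fun _ => c
  simp only [hconst, Finset.sum_const, Finset.card_univ, nsmul_eq_mul, Fintype.card_fun, ZMod.card,
    Fintype.card_fin, Nat.cast_pow, Nat.cast_ofNat] at hsum
  rw [q0, ← hsum]
  field_simp

lemma flatLaw_of_apply_zero_eq_zero (hkn : k ≤ n) (x : F2n n) {μ : (Fin k → ZMod 2) → ℝ}
    (hμ : μ 0 = 0) (W : Flat n k) : flatLaw x μ W = (∑ δ, μ δ) * qx n k x W := by
  have hmem (W : Flat n k) (hW : x ∈ W.1) : flatLaw x μ W = 0 := by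
    refine mul_eq_zero_of_right _ (Fintype.sum_eq_zero _ fun ℓ => Fintype.sum_eq_zero _ fun δ => ?_)
    refine ite_eq_right_iff.2 fun h => ?_
    rw [← h, self_mem_levelSet_iff] at hW
    rw [hW, hμ]
  by_cases hW : x ∈ W.1
  · rw [hmem W hW, qx, if_pos hW, mul_zero]
  have hsum : ∑ δ, μ δ = Nat.card {W : Flat n k // x ∉ W.1} * flatLaw x μ W := by
    rw [← sum_flatLaw hkn x, Nat.subtype_card {W : Flat n k | x ∉ W.1} (by simp), ← nsmul_eq_mul,
      ← Finset.sum_const, Finset.sum_filter]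
    refine Fintype.sum_congr _ _ fun W' => ?_
    split_ifs with hW'
    · exact hmem W' hW'
    · exact flatLaw_congr μ (iff_of_false hW' hW)
  have : Nonempty {W : Flat n k // x ∉ W.1} := ⟨W, hW⟩
  rw [qx, if_neg hW, hsum, mul_comm, inv_mul_cancel_left₀ (Nat.cast_ne_zero.2 Nat.card_pos.ne')]

lemma flatLaw_eq (hkn : k ≤ n) (x : F2n n) (μ : (Fin k → ZMod 2) → ℝ) (W : Flat n k) :
    flatLaw x μ W = 2 ^ k * μ 0 * q0 n k W + (∑ δ, μ δ - 2 ^ k * μ 0) * qx n k x W := by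
  have hμ : μ = (fun _ => μ 0) + fun δ => μ δ - μ 0 := by
    ext δ
    simp
  rw [hμ, flatLaw_add, flatLaw_const hkn, flatLaw_of_apply_zero_eq_zero hkn x (sub_self _)]
  simp

end FlatLaw

section NoisyParities

variable {m : ℕ}

lemma sum_snoc_sub_add {G M : Type*} [AddGroup G] [Fintype G] [AddCommMonoid M]
    (a : Fin m → G) (c : G) (F : (Fin (m + 1) → G) → M) :
    ∑ ε : Fin m → G, ∑ e : G, F (Fin.snoc (ε - a) (c + e)) = ∑ δ, F δ := by
  calc ∑ ε : Fin m → G, ∑ e : G, F (Fin.snoc (ε - a) (c + e))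
      = ∑ ε : Fin m → G, ∑ e : G, F (Fin.snoc ε (c + e)) :=
        Equiv.sum_comp (Equiv.subRight a) fun ε => ∑ e, F (Fin.snoc ε (c + e))
    _ = ∑ ε : Fin m → G, ∑ e : G, F (Fin.snoc ε e) :=
        Fintype.sum_congr _ _ fun ε => Equiv.sum_comp (Equiv.addLeft c) fun e => F (Fin.snoc ε e)
    _ = ∑ δ, F δ := by
        rw [← (Fin.snocEquiv fun _ => G).sum_comp, Fintype.sum_prod_type_right]
        rfl

/-- The law of the offset vector of `m + 1` parities of which only the last is compared with the
secret: `m` uniform bits followed by `1 + e`, where the error `e` has rate `η`. -/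
noncomputable def noisyOffset (m : ℕ) (η : ℝ) (δ : Fin (m + 1) → ZMod 2) : ℝ :=
  (2 ^ m)⁻¹ * if δ (Fin.last m) = 0 then η else 1 - η

lemma noisyOffset_snoc (η : ℝ) (δ : Fin m → ZMod 2) (e : ZMod 2) :
    noisyOffset m η (Fin.snoc δ (1 + e)) = (2 ^ m)⁻¹ * if e = 1 then η else 1 - η := by
  have he : 1 + e = 0 ↔ e = 1 := by
    revert e
    decide
  simp only [noisyOffset, Fin.snoc_last, he]

lemma sum_noisyOffset (m : ℕ) (η : ℝ) : ∑ δ, noisyOffset m η δ = 1 := by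
  have hbit : ∑ e : ZMod 2, (if e = 1 then η else 1 - η) = 1 := by
    rw [show (Finset.univ : Finset (ZMod 2)) = {0, 1} from rfl]
    simp
  rw [← sum_snoc_sub_add 0 1]
  simp only [noisyOffset_snoc, ← Finset.mul_sum, hbit]
  simp

lemma setOf_parities_eq_levelSet {n : ℕ} (x : F2n n) (ℓ : Fin (m + 1) → LinForm n)
    (ε : Fin m → ZMod 2) (e : ZMod 2) :
    {z : F2n n | ∀ i : Fin (m + 1),
        ℓ i z = if h : (i : ℕ) < m then ε ⟨i, h⟩ else ℓ i x + 1 + e} =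
      levelSet x ℓ (Fin.snoc (ε - fun j => ℓ j.castSucc x) (1 + e)) := by
  ext z
  simp only [Set.mem_ofPred_eq, levelSet, Fin.forall_fin_succ']
  simp [sub_eq_iff_eq_add', add_assoc]

end NoisyParities

theorem stmt19_general (n k : ℕ) (hk : 1 ≤ k) (hkn : k ≤ n) (x : F2n n) (η : ℝ) (W : Flat n k) :
    ∑ ℓ : {ℓ : Fin k → LinForm n // LinearIndependent (ZMod 2) ℓ},
      ∑ ε' : Fin (k-1) → ZMod 2, ∑ e : ZMod 2,
        (Nat.card {ℓ : Fin k → LinForm n // LinearIndependent (ZMod 2) ℓ} : ℝ)⁻¹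
          * ((2:ℝ)^(k-1))⁻¹ * (if e = 1 then η else 1 - η)
          * (if {z : F2n n | ∀ i : Fin k,
                  ℓ.1 i z = (if h : (i : ℕ) < k - 1 then ε' ⟨i, h⟩ else ℓ.1 i x + 1 + e)} = W.1
             then (1:ℝ) else 0)
      = (1 - (1 - 2*η)) * q0 n k W + (1 - 2*η) * qx n k x W := by
  obtain ⟨m, rfl⟩ := Nat.exists_eq_add_of_le' hk
  calc _ = flatLaw x (noisyOffset m η) W := by
        rw [flatLaw, Finset.mul_sum]
        refine Fintype.sum_congr _ _ fun ℓ => ?_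
        rw [← sum_snoc_sub_add (fun j => ℓ.1 j.castSucc x) 1, Finset.mul_sum]
        refine Fintype.sum_congr _ _ fun ε => ?_
        rw [Finset.mul_sum]
        refine Fintype.sum_congr _ _ fun e => ?_
        rw [← setOf_parities_eq_levelSet, noisyOffset_snoc, mul_boole, mul_assoc, ← mul_ite_zero]
        rfl
    _ = _ := by
        have hzero : 2 ^ (m + 1) * noisyOffset m η 0 = 2 * η := by
          simp only [noisyOffset, Pi.zero_apply, if_true]
          field_simp
          ring
        rw [flatLaw_eq hkn, sum_noisyOffset, hzero]
        ring

theorem stmt19 (n k : ℕ) (hk : 1 ≤ k) (hkn : k ≤ n) (x : F2n n)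
    (η : ℝ) (hη0 : 0 ≤ η) (hη : η < 1/2) (W : Flat n k) :
    ∑ ℓ : {ℓ : Fin k → LinForm n // LinearIndependent (ZMod 2) ℓ},
      ∑ ε' : Fin (k-1) → ZMod 2, ∑ e : ZMod 2,
        (Nat.card {ℓ : Fin k → LinForm n // LinearIndependent (ZMod 2) ℓ} : ℝ)⁻¹
          * ((2:ℝ)^(k-1))⁻¹ * (if e = 1 then η else 1 - η)
          * (if {z : F2n n | ∀ i : Fin k,
                  ℓ.1 i z = (if h : (i : ℕ) < k - 1 then ε' ⟨i, h⟩ else ℓ.1 i x + 1 + e)} = W.1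
             then (1:ℝ) else 0)
      = (1 - (1 - 2*η)) * q0 n k W + (1 - 2*η) * qx n k x W :=
  stmt19_general n k hk hkn x η W
end
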